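/- arXiv:1606.03562 — 6 statements merged into one kernel-verified Lean document; each statement's English description precedes it below -/
import Mathlib

section
/- For any justification logic JL among J and its extensions by the axioms jT, jD, j4, jB, j5, and any constant specification CS for JL, a JL-formula F is provable in the Hilbert system JL_CS if and only if F is JL_CS-valid, i.e., true in every M-model of JL_CS. -/
namespace JLTab

/-- Justification terms: variables, constants, application, sum,
verifier `!`, negative verifier `?`, weak negative verifier `?̄`. -/
inductive Term : Type
  | var : ℕ → Term
  | const : ℕ → Term
  | app : Term → Term → Term
  | sum : Term → Term → Term
  | bang : Term → Term
  | quest : Term → Term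
  | qbar : Term → Term
  deriving DecidableEq

/-- JL-formulas: `A ::= p | ⊥ | ¬A | A → A | t:A`. -/
inductive Fml : Type
  | prop : ℕ → Fml
  | bot : Fml
  | neg : Fml → Fml
  | imp : Fml → Fml → Fml
  | box : Term → Fml → Fml
  deriving DecidableEq

/-- A justification logic JL is J extended by any combination of jT, jD, j4, jB, j5. -/
structure Logic where
  hasT : Bool
  hasD : Bool
  has4 : Bool
  hasB : Bool
  has5 : Bool

/-- The basic justification logic J. -/
def Logic.J : Logic := ⟨false, false, false, false, false⟩

/-- The logic of proofs LP = JT4. -/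
def Logic.LP : Logic := ⟨true, false, true, false, false⟩

/-- The logic JT45. -/
def Logic.JT45 : Logic := ⟨true, false, true, false, true⟩

/-- Propositional evaluation of a formula, treating propositional variables and
formulas `t:A` as atoms. -/
def evalProp (v : Fml → Bool) : Fml → Bool
  | .prop n => v (.prop n)
  | .bot => false
  | .neg A => !(evalProp v A)
  | .imp A B => !(evalProp v A) || evalProp v B
  | .box t A => v (.box t A)

/-- A propositional tautology. -/
def IsTaut (A : Fml) : Prop := ∀ v : Fml → Bool, evalProp v A = true

/-- Axiom instances of the justification logic `L`. -/
inductive Axm (L : Logic) : Fml → Prop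
  | taut {A} : IsTaut A → Axm L A
  | sumL {s t A} : Axm L (.imp (.box s A) (.box (.sum s t) A))
  | sumR {s t A} : Axm L (.imp (.box s A) (.box (.sum t s) A))
  | jK {s t A B} :
      Axm L (.imp (.box s (.imp A B)) (.imp (.box t A) (.box (.app s t) B)))
  | jT {t A} : L.hasT = true → Axm L (.imp (.box t A) A)
  | jD {t} : L.hasD = true → Axm L (.imp (.box t .bot) .bot)
  | j4 {t A} : L.has4 = true → Axm L (.imp (.box t A) (.box (.bang t) (.box t A)))
  | jB {t A} : L.hasB = true →
      Axm L (.imp (.neg A) (.box (.qbar t) (.neg (.box t A))))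
  | j5 {t A} : L.has5 = true →
      Axm L (.imp (.neg (.box t A)) (.box (.quest t) (.neg (.box t A))))

/-- Formulas of the form `c_{i_n} : ⋯ : c_{i_1} : A` (n ≥ 1) with `A` an axiom
instance of `L`; exactly the formulas produced by Iterated Axiom Necessitation. -/
inductive IsIAN (L : Logic) : Fml → Prop
  | base {c A} : Axm L A → IsIAN L (.box (.const c) A)
  | step {c F} : IsIAN L F → IsIAN L (.box (.const c) F)

/-- A constant specification for `L`: a downward closed set of formulas of the
form `c_{i_n} : ⋯ : c_{i_1} : A` with `A` an axiom instance of `L`. -/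
structure ConstSpec (L : Logic) where
  set : Set Fml
  mem_ian : ∀ F ∈ set, IsIAN L F
  downward : ∀ c F, Fml.box (Term.const c) F ∈ set → IsIAN L F → F ∈ set

/-- The Hilbert system JL_CS: axioms of `L`, Modus Ponens, and Iterated Axiom
Necessitation restricted to the constant specification `cs`. -/
inductive Deriv (L : Logic) (cs : ConstSpec L) : Fml → Prop
  | axm {A} : Axm L A → Deriv L cs A
  | mp {A B} : Deriv L cs (.imp A B) → Deriv L cs A → Deriv L cs B
  | ian {F} : F ∈ cs.set → Deriv L cs F

/-- An M-model (Mkrtychev model): an admissible evidence function together with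
a valuation of propositional variables. -/
structure MModel where
  ev : Term → Set Fml
  val : ℕ → Prop

/-- Truth in an M-model; `t:A` is true iff `A ∈ E(t)`. -/
def MModel.sat (M : MModel) : Fml → Prop
  | .prop n => M.val n
  | .bot => False
  | .neg A => ¬ M.sat A
  | .imp A B => M.sat A → M.sat B
  | .box t A => A ∈ M.ev t

/-- `M` is an M-model for JL_CS: conditions E1–E3 always, and E4–E8 according to
the extra axioms of the logic `L`. -/
structure IsModel (L : Logic) (cs : ConstSpec L) (M : MModel) : Prop where
  e1 : ∀ s t A B, Fml.imp A B ∈ M.ev s → A ∈ M.ev t → B ∈ M.ev (.app s t)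
  e2l : ∀ s t, M.ev s ⊆ M.ev (.sum s t)
  e2r : ∀ s t, M.ev t ⊆ M.ev (.sum s t)
  e3 : ∀ c F, Fml.box (.const c) F ∈ cs.set → F ∈ M.ev (.const c)
  e4 : L.hasT = true → ∀ t A, A ∈ M.ev t → M.sat A
  e5 : L.hasD = true → ∀ t, Fml.bot ∉ M.ev t
  e6 : L.has4 = true → ∀ t A, A ∈ M.ev t → Fml.box t A ∈ M.ev (.bang t)
  e7 : L.hasB = true → ∀ t A, ¬ M.sat A → Fml.neg (.box t A) ∈ M.ev (.qbar t)
  e8 : L.has5 = true → ∀ t A, A ∉ M.ev t → Fml.neg (.box t A) ∈ M.ev (.quest t)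

/-- `A` is JL_CS-valid: true in every M-model of JL_CS. -/
def Valid (L : Logic) (cs : ConstSpec L) (A : Fml) : Prop :=
  ∀ M : MModel, IsModel L cs M → M.sat A

/-- `Subf A B`: `A` is a subformula of `B`. -/
inductive Subf : Fml → Fml → Prop
  | refl (A) : Subf A A
  | neg {A B} : Subf A B → Subf A (.neg B)
  | impL {A B C} : Subf A B → Subf A (.imp B C)
  | impR {A C B} : Subf A C → Subf A (.imp B C)
  | box {A B t} : Subf A B → Subf A (.box t B)

/-- `A` is a CS-subformula of the root set `R`: a subformula of a formula in
`R ∪ CS`. -/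
def CSSub {L : Logic} (cs : ConstSpec L) (R : Set Fml) (A : Fml) : Prop :=
  (∃ B ∈ R, Subf A B) ∨ (∃ F ∈ cs.set, Subf A F)

/-- `A` is a weak CS-subformula of the root set `R`: a subformula, or the
negation of a subformula, of a formula in `R ∪ CS`. -/
def WeakCSSub {L : Logic} (cs : ConstSpec L) (R : Set Fml) (A : Fml) : Prop :=
  CSSub cs R A ∨ ∃ C, A = Fml.neg C ∧ CSSub cs R C

/-- `SubTm u t`: `u` is a subterm of `t`. -/
inductive SubTm : Term → Term → Prop
  | refl (t) : SubTm t t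
  | appL {u s t} : SubTm u s → SubTm u (.app s t)
  | appR {u s t} : SubTm u t → SubTm u (.app s t)
  | sumL {u s t} : SubTm u s → SubTm u (.sum s t)
  | sumR {u s t} : SubTm u t → SubTm u (.sum s t)
  | bang {u t} : SubTm u t → SubTm u (.bang t)
  | quest {u t} : SubTm u t → SubTm u (.quest t)
  | qbar {u t} : SubTm u t → SubTm u (.qbar t)

/-- `OccT u A`: the term `u` occurs in the formula `A`. -/
inductive OccT (u : Term) : Fml → Prop
  | neg {A} : OccT u A → OccT u (.neg A)
  | impL {A B} : OccT u A → OccT u (.imp A B)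
  | impR {A B} : OccT u B → OccT u (.imp A B)
  | boxT {t A} : SubTm u t → OccT u (.box t A)
  | boxF {t A} : OccT u A → OccT u (.box t A)

/-- The term `u` occurs in (some formula of) the root set `R`. -/
def OccRoot (R : Set Fml) (u : Term) : Prop := ∃ B ∈ R, OccT u B

/-- Nodes of a tableau: JL-formulas `A`, and evidential formulas
`[t,A]` (`pos`) and `∼[t,A]` (`neg`). -/
inductive Node : Type
  | fml : Fml → Node
  | pos : Term → Fml → Node
  | neg : Term → Fml → Node
  deriving DecidableEq

/-- `TabN L cs pb cut R Γ n`: the branch `Γ` of a tableau with root set `R` has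
a closed tableau continuation using `n` rule applications.  The flag `pb`
enables the analytic rules (PB), (PB_e); the flag `cut` enables the
unrestricted cut rules (cut_f), (cut_e).  The rules (e), (e_⊥), (!), (?̄), (?)
are enabled according to the extra axioms of the logic `L`.  Base cases are the
four branch-closure conditions. -/
inductive TabN (L : Logic) (cs : ConstSpec L) (pb cut : Bool) (R : Set Fml) :
    Set Node → ℕ → Prop
  | closeF {Γ A} : Node.fml A ∈ Γ → Node.fml (.neg A) ∈ Γ → TabN L cs pb cut R Γ 0
  | closeE {Γ t A} : Node.pos t A ∈ Γ → Node.neg t A ∈ Γ → TabN L cs pb cut R Γ 0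
  | closeBot {Γ} : Node.fml .bot ∈ Γ → TabN L cs pb cut R Γ 0
  | closeCS {Γ c F} : Fml.box (.const c) F ∈ cs.set →
      Node.fml (.neg (.box (.const c) F)) ∈ Γ → TabN L cs pb cut R Γ 0
  | fNeg {Γ A n} : Node.fml (.neg (.neg A)) ∈ Γ →
      TabN L cs pb cut R (insert (Node.fml A) Γ) n → TabN L cs pb cut R Γ (n + 1)
  | fImp {Γ A B n} : Node.fml (.neg (.imp A B)) ∈ Γ →
      TabN L cs pb cut R (insert (Node.fml A) (insert (Node.fml (.neg B)) Γ)) n →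
      TabN L cs pb cut R Γ (n + 1)
  | tImp {Γ A B m n} : Node.fml (.imp A B) ∈ Γ →
      TabN L cs pb cut R (insert (Node.fml (.neg A)) Γ) m →
      TabN L cs pb cut R (insert (Node.fml B) Γ) n →
      TabN L cs pb cut R Γ (m + n + 1)
  | te {Γ t A n} : Node.fml (.box t A) ∈ Γ →
      TabN L cs pb cut R (insert (Node.pos t A) Γ) n → TabN L cs pb cut R Γ (n + 1)
  | fe {Γ t A n} : Node.fml (.neg (.box t A)) ∈ Γ →
      TabN L cs pb cut R (insert (Node.neg t A) Γ) n → TabN L cs pb cut R Γ (n + 1)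
  | plusL {Γ t s A n} : Node.neg (.sum t s) A ∈ Γ →
      TabN L cs pb cut R (insert (Node.neg t A) Γ) n → TabN L cs pb cut R Γ (n + 1)
  | plusR {Γ t s A n} : Node.neg (.sum t s) A ∈ Γ →
      TabN L cs pb cut R (insert (Node.neg s A) Γ) n → TabN L cs pb cut R Γ (n + 1)
  | appR {Γ s t A B n} : Node.pos s (.imp A B) ∈ Γ → Node.pos t A ∈ Γ →
      CSSub cs R (.imp A B) → OccRoot R (.app s t) →
      TabN L cs pb cut R (insert (Node.pos (.app s t) B) Γ) n →
      TabN L cs pb cut R Γ (n + 1)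
  | rulePB {Γ A m n} : pb = true → CSSub cs R A →
      TabN L cs pb cut R (insert (Node.fml A) Γ) m →
      TabN L cs pb cut R (insert (Node.fml (.neg A)) Γ) n →
      TabN L cs pb cut R Γ (m + n + 1)
  | rulePBe {Γ t A m n} : pb = true → CSSub cs R A → OccRoot R t →
      TabN L cs pb cut R (insert (Node.pos t A) Γ) m →
      TabN L cs pb cut R (insert (Node.neg t A) Γ) n →
      TabN L cs pb cut R Γ (m + n + 1)
  | cutF {Γ A m n} : cut = true →
      TabN L cs pb cut R (insert (Node.fml A) Γ) m →
      TabN L cs pb cut R (insert (Node.fml (.neg A)) Γ) n →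
      TabN L cs pb cut R Γ (m + n + 1)
  | cutE {Γ t A m n} : cut = true →
      TabN L cs pb cut R (insert (Node.pos t A) Γ) m →
      TabN L cs pb cut R (insert (Node.neg t A) Γ) n →
      TabN L cs pb cut R Γ (m + n + 1)
  | ruleT {Γ t A n} : L.hasT = true → Node.pos t A ∈ Γ →
      TabN L cs pb cut R (insert (Node.fml A) Γ) n → TabN L cs pb cut R Γ (n + 1)
  | ruleD {Γ t n} : L.hasD = true → Node.pos t .bot ∈ Γ →
      TabN L cs pb cut R (insert (Node.fml .bot) Γ) n → TabN L cs pb cut R Γ (n + 1)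
  | rule4 {Γ t A n} : L.has4 = true → Node.neg (.bang t) (.box t A) ∈ Γ →
      TabN L cs pb cut R (insert (Node.neg t A) Γ) n → TabN L cs pb cut R Γ (n + 1)
  | ruleB {Γ t A n} : L.hasB = true → Node.neg (.qbar t) (.neg (.box t A)) ∈ Γ →
      TabN L cs pb cut R (insert (Node.fml A) Γ) n → TabN L cs pb cut R Γ (n + 1)
  | rule5 {Γ t A n} : L.has5 = true → Node.neg (.quest t) (.neg (.box t A)) ∈ Γ →
      TabN L cs pb cut R (insert (Node.pos t A) Γ) n → TabN L cs pb cut R Γ (n + 1)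

/-- There is a closed tableau below the branch `Γ` (root set `R`). -/
def Tab (L : Logic) (cs : ConstSpec L) (pb cut : Bool) (R : Set Fml)
    (Γ : Set Node) : Prop :=
  ∃ n, TabN L cs pb cut R Γ n

/-- A tableau proof of `A`: a closed tableau whose root is `¬A`. -/
def TabProof (L : Logic) (cs : ConstSpec L) (pb cut : Bool) (A : Fml) : Prop :=
  Tab L cs pb cut {Fml.neg A} {Node.fml (Fml.neg A)}

/-- A single application of a JL^e_CS-tableau rule to the branch `Γ` (root set
`R`), producing the list of extended branches (one for a non-branching rule,
two for a branching rule). -/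
inductive RuleApp (L : Logic) (cs : ConstSpec L) (R : Set Fml) (Γ : Set Node) :
    List (Set Node) → Prop
  | fNeg {A} : Node.fml (.neg (.neg A)) ∈ Γ →
      RuleApp L cs R Γ [insert (Node.fml A) Γ]
  | fImp {A B} : Node.fml (.neg (.imp A B)) ∈ Γ →
      RuleApp L cs R Γ [insert (Node.fml A) (insert (Node.fml (.neg B)) Γ)]
  | tImp {A B} : Node.fml (.imp A B) ∈ Γ →
      RuleApp L cs R Γ [insert (Node.fml (.neg A)) Γ, insert (Node.fml B) Γ]
  | te {t A} : Node.fml (.box t A) ∈ Γ → RuleApp L cs R Γ [insert (Node.pos t A) Γ]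
  | fe {t A} : Node.fml (.neg (.box t A)) ∈ Γ →
      RuleApp L cs R Γ [insert (Node.neg t A) Γ]
  | plusL {t s A} : Node.neg (.sum t s) A ∈ Γ →
      RuleApp L cs R Γ [insert (Node.neg t A) Γ]
  | plusR {t s A} : Node.neg (.sum t s) A ∈ Γ →
      RuleApp L cs R Γ [insert (Node.neg s A) Γ]
  | appR {s t A B} : Node.pos s (.imp A B) ∈ Γ → Node.pos t A ∈ Γ →
      CSSub cs R (.imp A B) → OccRoot R (.app s t) →
      RuleApp L cs R Γ [insert (Node.pos (.app s t) B) Γ]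
  | rulePB {A} : CSSub cs R A →
      RuleApp L cs R Γ [insert (Node.fml A) Γ, insert (Node.fml (.neg A)) Γ]
  | rulePBe {t A} : CSSub cs R A → OccRoot R t →
      RuleApp L cs R Γ [insert (Node.pos t A) Γ, insert (Node.neg t A) Γ]
  | ruleT {t A} : L.hasT = true → Node.pos t A ∈ Γ →
      RuleApp L cs R Γ [insert (Node.fml A) Γ]
  | ruleD {t} : L.hasD = true → Node.pos t .bot ∈ Γ →
      RuleApp L cs R Γ [insert (Node.fml .bot) Γ]
  | rule4 {t A} : L.has4 = true → Node.neg (.bang t) (.box t A) ∈ Γ →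
      RuleApp L cs R Γ [insert (Node.neg t A) Γ]
  | ruleB {t A} : L.hasB = true → Node.neg (.qbar t) (.neg (.box t A)) ∈ Γ →
      RuleApp L cs R Γ [insert (Node.fml A) Γ]
  | rule5 {t A} : L.has5 = true → Node.neg (.quest t) (.neg (.box t A)) ∈ Γ →
      RuleApp L cs R Γ [insert (Node.pos t A) Γ]

/-- Satisfaction of tableau nodes in an M-model: `M` satisfies `[t,A]` iff
`A ∈ E(t)`, and satisfies `∼[t,A]` iff `A ∉ E(t)`. -/
def NodeSat (M : MModel) : Node → Prop
  | .fml A => M.sat A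
  | .pos t A => A ∈ M.ev t
  | .neg t A => A ∉ M.ev t

/-- Branches reachable from the initial branch by tableau rule applications. -/
inductive Reach (L : Logic) (cs : ConstSpec L) (R : Set Fml) :
    Set Node → Set Node → Prop
  | refl (Γ) : Reach L cs R Γ Γ
  | step {Γ Γ' Γ'' exts} : Reach L cs R Γ Γ' → RuleApp L cs R Γ' exts →
      Γ'' ∈ exts → Reach L cs R Γ Γ''

/-- One non-redundant tableau construction step: a rule application properly
extending the branch. -/
def Step (L : Logic) (cs : ConstSpec L) (R : Set Fml) (Γ Γ' : Set Node) : Prop :=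
  ∃ exts, RuleApp L cs R Γ exts ∧ Γ' ∈ exts ∧ Γ ⊂ Γ'

/-- The term is in the language of the logic `L` (which contains those
operations occurring in the axioms of `L`). -/
def TermInLang (L : Logic) : Term → Prop
  | .var _ => True
  | .const _ => True
  | .app s t => TermInLang L s ∧ TermInLang L t
  | .sum s t => TermInLang L s ∧ TermInLang L t
  | .bang t => L.has4 = true ∧ TermInLang L t
  | .quest t => L.has5 = true ∧ TermInLang L t
  | .qbar t => L.hasB = true ∧ TermInLang L t

/-- The formula is in the language of the logic `L`. -/
def FmlInLang (L : Logic) : Fml → Prop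
  | .prop _ => True
  | .bot => True
  | .neg A => FmlInLang L A
  | .imp A B => FmlInLang L A ∧ FmlInLang L B
  | .box t A => TermInLang L t ∧ FmlInLang L A

/-- The initial branch of a tableau for a finite set `S` of formulas. -/
def branchOf (S : Finset Fml) : Set Node := Node.fml '' (↑S : Set Fml)

end JLTab

namespace JLTab

/-- Propositional consequence from a set of formulas. -/
inductive Pr (S : Set Fml) : Fml → Prop
  | hyp {A} : A ∈ S → Pr S A
  | taut {A} : IsTaut A → Pr S A
  | mp {A B} : Pr S (.imp A B) → Pr S A → Pr S B

theorem Pr.deduct {S : Set Fml} {A B : Fml} (h : Pr (insert A S) B) : Pr S (.imp A B) := by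
  induction h with
  | @hyp C h =>
    rcases h with rfl | h
    · exact .taut (by intro v; simp [evalProp])
    · refine .mp (.taut ?_) (.hyp h)
      intro v; simp only [evalProp]; cases evalProp v C <;> cases evalProp v A <;> rfl
  | @taut C h =>
    refine .taut ?_
    intro v; simp [evalProp, h v]
  | @mp C D _ _ ih1 ih2 =>
    refine .mp (.mp (.taut ?_) ih1) ih2
    intro v; simp only [evalProp]
    cases evalProp v C <;> cases evalProp v A <;> cases evalProp v D <;> rfl

theorem Pr.mono {S T : Set Fml} (hST : S ⊆ T) {A : Fml} (h : Pr S A) : Pr T A := by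
  induction h with
  | hyp h => exact .hyp (hST h)
  | taut h => exact .taut h
  | mp _ _ ih1 ih2 => exact .mp ih1 ih2

theorem Pr.chain {c : Set (Set Fml)} (hc : IsChain (· ⊆ ·) c) (hne : c.Nonempty) {A : Fml}
    (h : Pr (⋃₀ c) A) : ∃ S ∈ c, Pr S A := by
  induction h with
  | hyp h => obtain ⟨S, hS, hA⟩ := h; exact ⟨S, hS, .hyp hA⟩
  | taut h => obtain ⟨S, hS⟩ := hne; exact ⟨S, hS, .taut h⟩
  | mp _ _ ih1 ih2 =>
    obtain ⟨S, hS, h1⟩ := ih1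
    obtain ⟨T, hT, h2⟩ := ih2
    rcases hc.total hS hT with h | h
    · exact ⟨T, hT, .mp (h1.mono h) h2⟩
    · exact ⟨S, hS, .mp h1 (h2.mono h)⟩

theorem Pr.deriv {L : Logic} {cs : ConstSpec L} {A : Fml} (h : Pr {B | Deriv L cs B} A) :
    Deriv L cs A := by
  induction h with
  | hyp h => exact h
  | taut h => exact .axm (.taut h)
  | mp _ _ ih1 ih2 => exact .mp ih1 ih2

open Classical in
theorem evalProp_sat (M : MModel) (A : Fml) :
    evalProp (fun B => decide (M.sat B)) A = true ↔ M.sat A := by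
  induction A with
  | prop n => simp [evalProp]
  | bot => simp [evalProp, MModel.sat]
  | neg A ih => simp [evalProp, MModel.sat, ← ih]
  | imp A B ihA ihB =>
    simp only [evalProp, MModel.sat, ← ihA, ← ihB]
    cases evalProp (fun B => decide (M.sat B)) A <;> simp
  | box t A => simp [evalProp]

theorem Axm.sound {L : Logic} {cs : ConstSpec L} {M : MModel} (hM : IsModel L cs M) {A : Fml}
    (h : Axm L A) : M.sat A := by
  cases h with
  | taut h => exact (evalProp_sat M A).1 (h _)
  | sumL => exact fun h => hM.e2l _ _ h
  | sumR => exact fun h => hM.e2r _ _ h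
  | jK => exact fun h1 h2 => hM.e1 _ _ _ _ h1 h2
  | jT hl => exact fun h => hM.e4 hl _ _ h
  | jD hl => exact fun h => hM.e5 hl _ h
  | j4 hl => exact fun h => hM.e6 hl _ _ h
  | jB hl => exact fun h => hM.e7 hl _ _ h
  | j5 hl => exact fun h => hM.e8 hl _ _ h

theorem Deriv.sound {L : Logic} {cs : ConstSpec L} {A : Fml} (h : Deriv L cs A) :
    Valid L cs A := by
  intro M hM
  induction h with
  | axm h => exact h.sound hM
  | mp _ _ ih1 ih2 => exact ih1 ih2
  | @ian F h =>
    cases cs.mem_ian _ h with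
    | base _ => exact hM.e3 _ _ h
    | step _ => exact hM.e3 _ _ h

theorem Valid.deriv {L : Logic} {cs : ConstSpec L} {F : Fml} (hv : Valid L cs F) :
    Deriv L cs F := by
  by_contra hF
  obtain ⟨T, hT0, hmax⟩ := zorn_subset_nonempty {S : Set Fml | ¬ Pr S F}
    (fun c hc hch hne => ⟨⋃₀ c, fun h => by
      obtain ⟨S, hS, h'⟩ := Pr.chain hch hne h
      exact hc hS h', fun s hs => Set.subset_sUnion_of_mem hs⟩)
    {B | Deriv L cs B} (fun h => hF h.deriv)
  have hTF : ¬ Pr T F := hmax.prop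
  have hout : ∀ A, A ∉ T → Pr T (.imp A F) := by
    intro A hA
    by_contra hn
    have h1 : ¬ Pr (insert A T) F := fun h => hn h.deduct
    exact hA (hmax.le_of_ge h1 (Set.subset_insert A T) (Set.mem_insert A T))
  have hcl : ∀ A, Pr T A → A ∈ T := by
    intro A hA
    by_contra hn
    exact hTF (.mp (hout A hn) hA)
  have hD : ∀ A, Deriv L cs A → A ∈ T := fun A h => hT0 h
  have hmp : ∀ A B, Fml.imp A B ∈ T → A ∈ T → B ∈ T :=
    fun A B h1 h2 => hcl _ (.mp (.hyp h1) (.hyp h2))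
  have hneg : ∀ A, Fml.neg A ∈ T ↔ A ∉ T := by
    intro A
    constructor
    · intro h1 h2
      refine hTF (.mp (.mp (.taut ?_) (.hyp h1)) (.hyp h2))
      intro v; simp only [evalProp]; cases evalProp v A <;> cases evalProp v F <;> rfl
    · intro h1
      by_contra h2
      refine hTF (.mp (.mp (.taut ?_) (hout _ h1)) (hout _ h2))
      intro v; simp only [evalProp]; cases evalProp v A <;> cases evalProp v F <;> rfl
  have hbot : Fml.bot ∉ T := by
    intro h
    exact hTF (.mp (.taut (by intro v; simp [evalProp])) (.hyp h))
  have himp : ∀ A B, Fml.imp A B ∈ T ↔ (A ∈ T → B ∈ T) := by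
    intro A B
    refine ⟨hmp A B, fun h => ?_⟩
    by_cases hA : A ∈ T
    · refine hcl _ (.mp (.taut ?_) (.hyp (h hA)))
      intro v; simp only [evalProp]; cases evalProp v A <;> cases evalProp v B <;> rfl
    · refine hcl _ (.mp (.taut ?_) (.hyp ((hneg A).2 hA)))
      intro v; simp only [evalProp]; cases evalProp v A <;> cases evalProp v B <;> rfl
  let M : MModel := ⟨fun t => {A | Fml.box t A ∈ T}, fun n => Fml.prop n ∈ T⟩
  have htruth : ∀ A, M.sat A ↔ A ∈ T := by
    intro A
    induction A with
    | prop n => exact Iff.rfl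
    | bot => exact ⟨fun h => h.elim, fun h => hbot h⟩
    | neg A ih => rw [hneg, ← ih]; rfl
    | imp A B ihA ihB => rw [himp, ← ihA, ← ihB]; rfl
    | box t A => exact Iff.rfl
  have hM : IsModel L cs M :=
    { e1 := fun s t A B h1 h2 => hmp _ _ (hmp _ _ (hD _ (.axm .jK)) h1) h2
      e2l := fun s t A h => hmp _ _ (hD _ (.axm .sumL)) h
      e2r := fun s t A h => hmp _ _ (hD _ (.axm .sumR)) h
      e3 := fun c G h => hD _ (.ian h)
      e4 := fun hl t A h => (htruth A).2 (hmp _ _ (hD _ (.axm (.jT hl))) h)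
      e5 := fun hl t h => hbot (hmp _ _ (hD _ (.axm (.jD hl))) h)
      e6 := fun hl t A h => hmp _ _ (hD _ (.axm (.j4 hl))) h
      e7 := fun hl t A h => hmp _ _ (hD _ (.axm (.jB hl)))
        ((hneg A).2 fun h' => h ((htruth A).2 h'))
      e8 := fun hl t A h => hmp _ _ (hD _ (.axm (.j5 hl))) ((hneg _).2 h) }
  exact hTF (.hyp ((htruth F).1 (hv M hM)))

end JLTab

/-- Theorem 1: For any justification logic JL (J plus any
combination of jT, jD, j4, jB, j5) and any constant specification CS for JL, a
JL-formula F is provable in the Hilbert system JL_CS iff F is JL_CS-valid. -/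
theorem JLTab.hilbert_soundness_completeness (L : Logic) (cs : ConstSpec L) (F : Fml) :
    Deriv L cs F ↔ Valid L cs F := by
  exact ⟨Deriv.sound, Valid.deriv⟩
end

section
/- Let π be any branch of a JL^e_CS-tableau and M be a JL_CS M-model that satisfies all the formulas occurring in π. If a JL^e_CS-tableau rule is applied to π, then the application produces at least one extension π′ such that M satisfies all the formulas occurring in π′. -/
/-- Adding a satisfied node to a satisfied branch keeps it satisfied. -/
theorem JLTab.insert_sat {M : MModel} {Γ : Set Node} {ψ : Node}
    (h : NodeSat M ψ) (hΓ : ∀ φ ∈ Γ, NodeSat M φ) :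
    ∀ φ ∈ insert ψ Γ, NodeSat M φ := by
  rintro φ (rfl | hφ)
  · exact h
  · exact hΓ φ hφ

/-- If an M-model of JL_CS satisfies all formulas on a tableau
branch, then any JL^e_CS-tableau rule application to the branch produces at
least one extension all of whose formulas the model satisfies. -/
theorem JLTab.rule_application_soundness (L : Logic) (cs : ConstSpec L) (R : Set Fml)
    (Γ : Set Node) (exts : List (Set Node)) (M : MModel)
    (hM : IsModel L cs M) (hΓ : ∀ φ ∈ Γ, NodeSat M φ)
    (happ : RuleApp L cs R Γ exts) :
    ∃ Γ' ∈ exts, ∀ φ ∈ Γ', NodeSat M φ := by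
  have single : ∀ ψ : Node, NodeSat M ψ →
      ∃ Γ' ∈ [insert ψ Γ], ∀ φ ∈ Γ', NodeSat M φ := fun ψ h =>
    ⟨_, List.mem_singleton.2 rfl, insert_sat h hΓ⟩
  have double : ∀ ψ χ : Node, NodeSat M ψ ∨ NodeSat M χ →
      ∃ Γ' ∈ [insert ψ Γ, insert χ Γ], ∀ φ ∈ Γ', NodeSat M φ := by
    rintro ψ χ (h | h)
    · exact ⟨_, List.mem_cons_self, insert_sat h hΓ⟩
    · exact ⟨_, List.mem_cons_of_mem _ List.mem_cons_self, insert_sat h hΓ⟩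
  cases happ with
  | fNeg h => exact single _ (not_not.1 (hΓ _ h))
  | @fImp A B h =>
    have h' : ¬ (M.sat A → M.sat B) := hΓ _ h
    obtain ⟨hA, hB⟩ := Classical.not_imp.1 h'
    exact ⟨_, List.mem_singleton.2 rfl,
      insert_sat (ψ := .fml A) hA (insert_sat (ψ := .fml (.neg B)) hB hΓ)⟩
  | @tImp A B h =>
    have h' : M.sat A → M.sat B := hΓ _ h
    exact double _ _ (not_or_of_imp h')
  | te h => have h1 := hΓ _ h; exact single _ h1
  | fe h => have h1 := hΓ _ h; exact single _ h1
  | plusL h => exact single _ (fun h' => hΓ _ h (hM.e2l _ _ h'))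
  | plusR h => exact single _ (fun h' => hΓ _ h (hM.e2r _ _ h'))
  | appR h1 h2 _ _ => exact single _ (hM.e1 _ _ _ _ (hΓ _ h1) (hΓ _ h2))
  | @rulePB A _ => exact double _ _ (Classical.em (M.sat A))
  | @rulePBe t A _ _ => exact double _ _ (Classical.em (A ∈ M.ev t))
  | ruleT hT h => exact single _ (hM.e4 hT _ _ (hΓ _ h))
  | ruleD hD h => exact absurd (hΓ _ h) (hM.e5 hD _)
  | rule4 h4 h => exact single _ (fun h' => hΓ _ h (hM.e6 h4 _ _ h'))
  | ruleB hB h => exact single _ (Classical.not_not.1 fun h' => hΓ _ h (hM.e7 hB _ _ h'))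
  | rule5 h5 h => exact single _ (Classical.not_not.1 fun h' => hΓ _ h (hM.e8 h5 _ _ h'))
end

section
/- Soundness of the analytic tableaux: if a JL-formula A has a JL^e_CS-tableau proof (a closed JL^e_CS-tableau beginning with ¬A), then A is JL_CS-valid. -/
namespace JLTab

theorem soundAux {L : Logic} {cs : ConstSpec L} {pb cut : Bool} {R : Set Fml} {M : MModel}
    (hM : IsModel L cs M) {Γ : Set Node} {n : ℕ} (h : TabN L cs pb cut R Γ n) :
    ¬ ∀ x ∈ Γ, NodeSat M x := by
  induction h with
  | closeF h1 h2 => exact fun H => H _ h2 (H _ h1)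
  | closeE h1 h2 => exact fun H => H _ h2 (H _ h1)
  | closeBot h1 => exact fun H => H _ h1
  | closeCS h1 h2 => exact fun H => H _ h2 (hM.e3 _ _ h1)
  | fNeg h1 _ ih =>
    exact fun H => ih (Set.forall_mem_insert.2 ⟨not_not.1 (H _ h1), H⟩)
  | fImp h1 _ ih =>
    intro H
    have h := Classical.not_imp.1 (H _ h1)
    exact ih (Set.forall_mem_insert.2 ⟨h.1, Set.forall_mem_insert.2 ⟨h.2, H⟩⟩)
  | tImp h1 _ _ ih1 ih2 =>
    intro H
    exact ih1 (Set.forall_mem_insert.2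
      ⟨fun hA => ih2 (Set.forall_mem_insert.2 ⟨H _ h1 hA, H⟩), H⟩)
  | te h1 _ ih =>
    intro H
    have h := H _ h1
    exact ih (Set.forall_mem_insert.2 ⟨h, H⟩)
  | fe h1 _ ih =>
    intro H
    have h := H _ h1
    exact ih (Set.forall_mem_insert.2 ⟨h, H⟩)
  | plusL h1 _ ih =>
    exact fun H => ih (Set.forall_mem_insert.2 ⟨fun h => H _ h1 (hM.e2l _ _ h), H⟩)
  | plusR h1 _ ih =>
    exact fun H => ih (Set.forall_mem_insert.2 ⟨fun h => H _ h1 (hM.e2r _ _ h), H⟩)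
  | appR h1 h2 _ _ _ ih =>
    exact fun H => ih (Set.forall_mem_insert.2 ⟨hM.e1 _ _ _ _ (H _ h1) (H _ h2), H⟩)
  | rulePB _ _ _ _ ih1 ih2 =>
    exact fun H => ih2 (Set.forall_mem_insert.2
      ⟨fun h => ih1 (Set.forall_mem_insert.2 ⟨h, H⟩), H⟩)
  | rulePBe _ _ _ _ _ ih1 ih2 =>
    exact fun H => ih2 (Set.forall_mem_insert.2
      ⟨fun h => ih1 (Set.forall_mem_insert.2 ⟨h, H⟩), H⟩)
  | cutF _ _ _ ih1 ih2 =>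
    exact fun H => ih2 (Set.forall_mem_insert.2
      ⟨fun h => ih1 (Set.forall_mem_insert.2 ⟨h, H⟩), H⟩)
  | cutE _ _ _ ih1 ih2 =>
    exact fun H => ih2 (Set.forall_mem_insert.2
      ⟨fun h => ih1 (Set.forall_mem_insert.2 ⟨h, H⟩), H⟩)
  | ruleT hl h1 _ ih =>
    exact fun H => ih (Set.forall_mem_insert.2 ⟨hM.e4 hl _ _ (H _ h1), H⟩)
  | ruleD hl h1 _ ih => exact fun H => hM.e5 hl _ (H _ h1)
  | rule4 hl h1 _ ih =>
    exact fun H => ih (Set.forall_mem_insert.2 ⟨fun h => H _ h1 (hM.e6 hl _ _ h), H⟩)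
  | ruleB hl h1 _ ih =>
    exact fun H => ih (Set.forall_mem_insert.2
      ⟨by_contra fun h => H _ h1 (hM.e7 hl _ _ h), H⟩)
  | rule5 hl h1 _ ih =>
    exact fun H => ih (Set.forall_mem_insert.2
      ⟨by_contra fun h => H _ h1 (hM.e8 hl _ _ h), H⟩)

end JLTab

/-- Soundness: if a JL-formula A has a JL^e_CS-tableau proof
(a closed tableau with root ¬A, PB rules allowed, no unrestricted cut), then A
is JL_CS-valid. -/
theorem JLTab.tableau_soundness (L : Logic) (cs : ConstSpec L) (A : Fml)
    (h : TabProof L cs true false A) : Valid L cs A := by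
  intro M hM
  obtain ⟨n, hn⟩ := h
  by_contra hA
  refine soundAux hM hn ?_
  intro x hx
  rw [Set.mem_singleton_iff.1 hx]
  exact hA
end

section
/- Subformula property: in any JL^e_CS-tableau proof, every JL-formula occurring in the proof is a weak CS-subformula of the root of the tableau; every JL-formula occurring inside an evidential formula [t,A] or ∼[t,A] is a CS-subformula of the root; and every term occurring inside an evidential formula occurs in the root or in a formula in CS. -/
namespace JLTab

theorem aux_subTm_trans {u s t : Term} (h1 : SubTm u s) (h2 : SubTm s t) : SubTm u t := by
  induction h2 with
  | refl => exact h1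
  | appL _ ih => exact .appL ih
  | appR _ ih => exact .appR ih
  | sumL _ ih => exact .sumL ih
  | sumR _ ih => exact .sumR ih
  | bang _ ih => exact .bang ih
  | quest _ ih => exact .quest ih
  | qbar _ ih => exact .qbar ih

theorem aux_occT_sub {u s : Term} {F : Fml} (h1 : SubTm u s) (h2 : OccT s F) : OccT u F := by
  induction h2 with
  | neg _ ih => exact .neg ih
  | impL _ ih => exact .impL ih
  | impR _ ih => exact .impR ih
  | boxT h => exact .boxT (aux_subTm_trans h1 h)
  | boxF _ ih => exact .boxF ih

theorem aux_subf_trans {A B C : Fml} (h1 : Subf A B) (h2 : Subf B C) : Subf A C := by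
  induction h2 with
  | refl => exact h1
  | neg _ ih => exact .neg ih
  | impL _ ih => exact .impL ih
  | impR _ ih => exact .impR ih
  | box _ ih => exact .box ih

theorem aux_occT_subf {u : Term} {A B : Fml} (h1 : OccT u A) (h2 : Subf A B) : OccT u B := by
  induction h2 with
  | refl => exact h1
  | neg _ ih => exact .neg ih
  | impL _ ih => exact .impL ih
  | impR _ ih => exact .impR ih
  | box _ ih => exact .boxF ih

variable {L : Logic} {cs : ConstSpec L} {R : Set Fml}

theorem aux_cssub {A B : Fml} (h1 : Subf A B) (h2 : CSSub cs R B) : CSSub cs R A := by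
  rcases h2 with ⟨F, hF, h⟩ | ⟨F, hF, h⟩
  · exact .inl ⟨F, hF, aux_subf_trans h1 h⟩
  · exact .inr ⟨F, hF, aux_subf_trans h1 h⟩

/-- The term occurs in the root or in a formula of CS. -/
def AuxOcc (cs : ConstSpec L) (R : Set Fml) (t : Term) : Prop :=
  OccRoot R t ∨ ∃ F ∈ cs.set, OccT t F

theorem aux_occ_box {t : Term} {A : Fml} (h : CSSub cs R (.box t A)) : AuxOcc cs R t := by
  rcases h with ⟨F, hF, h⟩ | ⟨F, hF, h⟩
  · exact .inl ⟨F, hF, aux_occT_subf (.boxT (.refl t)) h⟩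
  · exact .inr ⟨F, hF, aux_occT_subf (.boxT (.refl t)) h⟩

theorem aux_occ_sub {s t : Term} (h1 : SubTm s t) (h : AuxOcc cs R t) : AuxOcc cs R s := by
  rcases h with ⟨F, hF, h⟩ | ⟨F, hF, h⟩
  · exact .inl ⟨F, hF, aux_occT_sub h1 h⟩
  · exact .inr ⟨F, hF, aux_occT_sub h1 h⟩

theorem aux_weak_neg {A : Fml} (h : WeakCSSub cs R (.neg A)) : CSSub cs R A := by
  rcases h with h | ⟨C, hC, h⟩
  · exact aux_cssub (.neg (.refl A)) h
  · cases hC; exact h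

theorem aux_weak_imp {A B : Fml} (h : WeakCSSub cs R (.imp A B)) : CSSub cs R (.imp A B) := by
  rcases h with h | ⟨C, hC, h⟩
  · exact h
  · cases hC

theorem aux_weak_box {t : Term} {A : Fml} (h : WeakCSSub cs R (.box t A)) :
    CSSub cs R (.box t A) := by
  rcases h with h | ⟨C, hC, h⟩
  · exact h
  · cases hC

/-- The invariant for a single node. -/
def AuxGood (cs : ConstSpec L) (R : Set Fml) : Node → Prop
  | .fml B => WeakCSSub cs R B
  | .pos t B => CSSub cs R B ∧ AuxOcc cs R t
  | .neg t B => CSSub cs R B ∧ AuxOcc cs R t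

theorem aux_insert {Γ : Set Node} {ψ : Node} (hψ : AuxGood cs R ψ)
    (h : ∀ φ ∈ Γ, AuxGood cs R φ) : ∀ φ ∈ (insert ψ Γ : Set Node), AuxGood cs R φ := by
  rintro φ (rfl | hφ)
  · exact hψ
  · exact h φ hφ

theorem aux_step {Γ Γ' : Set Node} {exts : List (Set Node)} (hr : RuleApp L cs R Γ exts)
    (hm : Γ' ∈ exts) (h : ∀ φ ∈ Γ, AuxGood cs R φ) : ∀ φ ∈ Γ', AuxGood cs R φ := by
  cases hr with
  | fNeg hA =>
    obtain rfl := List.mem_singleton.1 hm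
    exact aux_insert (.inl (aux_cssub (.neg (.refl _)) (aux_weak_neg (h _ hA)))) h
  | fImp hA =>
    obtain rfl := List.mem_singleton.1 hm
    have hc := aux_weak_neg (h _ hA)
    exact aux_insert (.inl (aux_cssub (.impL (.refl _)) hc))
      (aux_insert (.inr ⟨_, rfl, aux_cssub (.impR (.refl _)) hc⟩) h)
  | tImp hA =>
    have hc := aux_weak_imp (h _ hA)
    rcases List.mem_pair.1 hm with rfl | rfl
    · exact aux_insert (.inr ⟨_, rfl, aux_cssub (.impL (.refl _)) hc⟩) h
    · exact aux_insert (.inl (aux_cssub (.impR (.refl _)) hc)) h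
  | te hA =>
    obtain rfl := List.mem_singleton.1 hm
    have hc := aux_weak_box (h _ hA)
    exact aux_insert ⟨aux_cssub (.box (.refl _)) hc, aux_occ_box hc⟩ h
  | fe hA =>
    obtain rfl := List.mem_singleton.1 hm
    have hc := aux_weak_neg (h _ hA)
    exact aux_insert ⟨aux_cssub (.box (.refl _)) hc, aux_occ_box hc⟩ h
  | plusL hA =>
    obtain rfl := List.mem_singleton.1 hm
    have hc := h _ hA
    exact aux_insert ⟨hc.1, aux_occ_sub (.sumL (.refl _)) hc.2⟩ h
  | plusR hA =>
    obtain rfl := List.mem_singleton.1 hm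
    have hc := h _ hA
    exact aux_insert ⟨hc.1, aux_occ_sub (.sumR (.refl _)) hc.2⟩ h
  | appR _ _ hc ho =>
    obtain rfl := List.mem_singleton.1 hm
    exact aux_insert ⟨aux_cssub (.impR (.refl _)) hc, .inl ho⟩ h
  | rulePB hc =>
    rcases List.mem_pair.1 hm with rfl | rfl
    · exact aux_insert (.inl hc) h
    · exact aux_insert (.inr ⟨_, rfl, hc⟩) h
  | rulePBe hc ho =>
    rcases List.mem_pair.1 hm with rfl | rfl
    · exact aux_insert ⟨hc, .inl ho⟩ h
    · exact aux_insert ⟨hc, .inl ho⟩ h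
  | ruleT _ hA =>
    obtain rfl := List.mem_singleton.1 hm
    exact aux_insert (.inl (h _ hA).1) h
  | ruleD _ hA =>
    obtain rfl := List.mem_singleton.1 hm
    exact aux_insert (.inl (h _ hA).1) h
  | rule4 _ hA =>
    obtain rfl := List.mem_singleton.1 hm
    have hc := (h _ hA).1
    exact aux_insert ⟨aux_cssub (.box (.refl _)) hc, aux_occ_box hc⟩ h
  | ruleB _ hA =>
    obtain rfl := List.mem_singleton.1 hm
    exact aux_insert (.inl (aux_cssub (.neg (.box (.refl _))) (h _ hA).1)) h
  | rule5 _ hA =>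
    obtain rfl := List.mem_singleton.1 hm
    have hc := aux_cssub (.neg (.refl _)) (h _ hA).1
    exact aux_insert ⟨aux_cssub (.box (.refl _)) hc, aux_occ_box hc⟩ h

theorem aux_reach {Γ Γ' : Set Node} (hr : Reach L cs R Γ Γ')
    (h : ∀ φ ∈ Γ, AuxGood cs R φ) : ∀ φ ∈ Γ', AuxGood cs R φ := by
  induction hr with
  | refl => exact h
  | step _ ha hm ih => exact aux_step ha hm ih

end JLTab

/-- Theorem 8, Subformula property: on any branch of a
JL^e_CS-tableau with root ¬A, every JL-formula is a weak CS-subformula of the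
root, every JL-formula inside an evidential formula is a CS-subformula of the
root, and every term inside an evidential formula occurs in the root or in a
formula of CS. -/
theorem JLTab.subformula_property (L : Logic) (cs : ConstSpec L) (A : Fml)
    (Γ : Set Node)
    (h : Reach L cs {Fml.neg A} {Node.fml (Fml.neg A)} Γ) :
    ∀ φ ∈ Γ,
      (∀ B, φ = Node.fml B → WeakCSSub cs {Fml.neg A} B) ∧
      (∀ t B, φ = Node.pos t B ∨ φ = Node.neg t B →
        CSSub cs {Fml.neg A} B ∧
          (OccT t (Fml.neg A) ∨ ∃ F ∈ cs.set, OccT t F)) := by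
  have key := aux_reach h (by
    rintro φ rfl
    exact Or.inl (Or.inl ⟨_, rfl, .refl _⟩))
  have occ : ∀ t, AuxOcc cs {Fml.neg A} t →
      (OccT t (Fml.neg A) ∨ ∃ F ∈ cs.set, OccT t F) := by
    rintro t (⟨F, rfl, hF⟩ | hF)
    · exact .inl hF
    · exact .inr hF
  intro φ hφ
  have hg := key φ hφ
  refine ⟨?_, ?_⟩
  · rintro B rfl
    exact hg
  · rintro t B (rfl | rfl)
    · exact ⟨hg.1, occ t hg.2⟩
    · exact ⟨hg.1, occ t hg.2⟩
end

section
/- For any finite constant specification CS for JL, every JL^e_CS-tableau terminates: the construction of a JL^e_CS-tableau for a given root formula involves only finitely many formulas and only finitely many rule applications. -/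
namespace JLTab

theorem Subf.tr {A B C : Fml} (h : Subf A B) (h' : Subf B C) : Subf A C := by
  induction h' with
  | refl => exact h
  | neg _ ih => exact .neg ih
  | impL _ ih => exact .impL ih
  | impR _ ih => exact .impR ih
  | box _ ih => exact .box ih

theorem SubTm.tr {a b c : Term} (h : SubTm a b) (h' : SubTm b c) : SubTm a c := by
  induction h' with
  | refl => exact h
  | appL _ ih => exact .appL ih
  | appR _ ih => exact .appR ih
  | sumL _ ih => exact .sumL ih
  | sumR _ ih => exact .sumR ih
  | bang _ ih => exact .bang ih
  | quest _ ih => exact .quest ih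
  | qbar _ ih => exact .qbar ih

theorem OccT.sub {u v : Term} {A : Fml} (h : SubTm u v) (h' : OccT v A) : OccT u A := by
  induction h' with
  | neg _ ih => exact .neg ih
  | impL _ ih => exact .impL ih
  | impR _ ih => exact .impR ih
  | boxT h' => exact .boxT (h.tr h')
  | boxF _ ih => exact .boxF ih

theorem OccT.subf {u : Term} {A B : Fml} (h : OccT u A) (h' : Subf A B) : OccT u B := by
  induction h' with
  | refl => exact h
  | neg _ ih => exact .neg ih
  | impL _ ih => exact .impL ih
  | impR _ ih => exact .impR ih
  | box _ ih => exact .boxF ih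

theorem finite_subf (B : Fml) : {A | Subf A B}.Finite := by
  induction B with
  | prop n => exact (Set.finite_singleton (Fml.prop n)).subset (by rintro A ⟨⟩; simp)
  | bot => exact (Set.finite_singleton Fml.bot).subset (by rintro A ⟨⟩; simp)
  | neg B ih =>
    exact (ih.insert (Fml.neg B)).subset (by
      intro A h; cases (show Subf A _ from h) <;> simp_all)
  | imp B C ih1 ih2 =>
    exact ((ih1.union ih2).insert (Fml.imp B C)).subset (by
      intro A h; cases (show Subf A _ from h) <;> simp_all)
  | box t B ih =>
    exact (ih.insert (Fml.box t B)).subset (by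
      intro A h; cases (show Subf A _ from h) <;> simp_all)

theorem finite_subTm (t : Term) : {u | SubTm u t}.Finite := by
  induction t with
  | var n => exact (Set.finite_singleton (Term.var n)).subset (by rintro A ⟨⟩; simp)
  | const n => exact (Set.finite_singleton (Term.const n)).subset (by rintro A ⟨⟩; simp)
  | app s t ih1 ih2 =>
    exact ((ih1.union ih2).insert (Term.app s t)).subset (by
      intro A h; cases (show SubTm A _ from h) <;> simp_all)
  | sum s t ih1 ih2 =>
    exact ((ih1.union ih2).insert (Term.sum s t)).subset (by
      intro A h; cases (show SubTm A _ from h) <;> simp_all)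
  | bang t ih =>
    exact (ih.insert (Term.bang t)).subset (by
      intro A h; cases (show SubTm A _ from h) <;> simp_all)
  | quest t ih =>
    exact (ih.insert (Term.quest t)).subset (by
      intro A h; cases (show SubTm A _ from h) <;> simp_all)
  | qbar t ih =>
    exact (ih.insert (Term.qbar t)).subset (by
      intro A h; cases (show SubTm A _ from h) <;> simp_all)

theorem finite_occT (B : Fml) : {u | OccT u B}.Finite := by
  induction B with
  | prop n => exact Set.finite_empty.subset (by rintro A ⟨⟩)
  | bot => exact Set.finite_empty.subset (by rintro A ⟨⟩)
  | neg B ih =>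
    exact ih.subset (by intro A h; cases (show OccT A _ from h) <;> simp_all)
  | imp B C ih1 ih2 =>
    exact (ih1.union ih2).subset (by
      intro A h; cases (show OccT A _ from h) <;> simp_all)
  | box t B ih =>
    exact ((finite_subTm t).union ih).subset (by
      intro A h; cases (show OccT A _ from h) <;> simp_all)

/-- Subformulas of formulas in `X`. -/
def SF (X : Set Fml) (A : Fml) : Prop := ∃ B ∈ X, Subf A B

/-- Terms occurring in formulas in `X`. -/
def TM (X : Set Fml) (u : Term) : Prop := ∃ B ∈ X, OccT u B

/-- The nodes that may occur in a tableau. -/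
def Good (X : Set Fml) : Node → Prop
  | .fml A => SF X (A) ∨ ∃ B, SF X B ∧ A = .neg B
  | .pos t A => TM X (t) ∧ SF X (A)
  | .neg t A => TM X (t) ∧ SF X (A)

theorem finite_good {X : Set Fml} (hX : X.Finite) : {N | Good X N}.Finite := by
  have h1 : {A | SF X A}.Finite := by
    refine (hX.biUnion (fun B _ => finite_subf B)).subset ?_
    rintro A ⟨B, hB, h⟩
    exact Set.mem_biUnion hB h
  have h2 : {A | TM X A}.Finite := by
    refine (hX.biUnion (fun B _ => finite_occT B)).subset ?_
    rintro A ⟨B, hB, h⟩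
    exact Set.mem_biUnion hB h
  have h3 := h2.prod h1
  refine ((((h1.union (h1.image Fml.neg)).image Node.fml).union
    (h3.image (fun p => Node.pos p.1 p.2))).union
    (h3.image (fun p => Node.neg p.1 p.2))).subset ?_
  rintro (A | ⟨t, A⟩ | ⟨t, A⟩) h
  · rcases h with h | ⟨B, h, rfl⟩
    · exact .inl (.inl ⟨_, .inl h, rfl⟩)
    · exact .inl (.inl ⟨_, .inr ⟨_, h, rfl⟩, rfl⟩)
  · exact .inl (.inr ⟨(t, A), h, rfl⟩)
  · exact .inr ⟨(t, A), h, rfl⟩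

variable {X : Set Fml}

theorem SF.sub {A B : Fml} (h : SF X (A)) (h' : Subf B A) : SF X (B) := by
  obtain ⟨C, hC, h⟩ := h
  exact ⟨C, hC, h'.tr h⟩

theorem SF.neg {A : Fml} (h : SF X (Fml.neg A)) : SF X (A) := h.sub (.neg (.refl _))
theorem SF.impL {A B : Fml} (h : SF X (Fml.imp A B)) : SF X (A) := h.sub (.impL (.refl _))
theorem SF.impR {A B : Fml} (h : SF X (Fml.imp A B)) : SF X (B) := h.sub (.impR (.refl _))
theorem SF.box {t : Term} {A : Fml} (h : SF X (Fml.box t A)) : SF X (A) := h.sub (.box (.refl _))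
theorem SF.tm {t : Term} {A : Fml} (h : SF X (Fml.box t A)) : TM X (t) := by
  obtain ⟨C, hC, h⟩ := h
  exact ⟨C, hC, (OccT.boxT (.refl _)).subf h⟩

theorem TM.sub {s t : Term} (h : TM X (t)) (h' : SubTm s t) : TM X (s) := by
  obtain ⟨C, hC, h⟩ := h
  exact ⟨C, hC, OccT.sub h' h⟩

theorem Good.ofNeg {A : Fml} (h : Good X (.fml (.neg A))) : SF X (A) := by
  rcases h with h | ⟨B, h, e⟩
  · exact SF.neg h
  · cases e; exact h

theorem Good.ofImp {A B : Fml} (h : Good X (.fml (.imp A B))) : SF X (Fml.imp A B) := by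
  rcases h with h | ⟨B, h, e⟩
  · exact h
  · cases e

theorem Good.ofBox {t : Term} {A : Fml} (h : Good X (.fml (.box t A))) : SF X (Fml.box t A) := by
  rcases h with h | ⟨B, h, e⟩
  · exact h
  · cases e

theorem insert_good {Γ : Set Node} {N : Node} (h : ∀ M ∈ Γ, Good X M) (hN : Good X N) :
    ∀ M ∈ insert N Γ, Good X M := by
  rintro M (rfl | hM)
  · exact hN
  · exact h M hM

theorem RuleApp.good {L : Logic} {cs : ConstSpec L} {R : Set Fml} {Γ : Set Node}
    {exts : List (Set Node)} (h : RuleApp L cs R Γ exts)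
    (hΓ : ∀ M ∈ Γ, Good (R ∪ cs.set) M) :
    ∀ Δ ∈ exts, ∀ M ∈ Δ, Good (R ∪ cs.set) M := by
  have hcs : ∀ A, CSSub cs R A → SF (R ∪ cs.set) (A) := by
    rintro A (⟨B, hB, h⟩ | ⟨B, hB, h⟩)
    · exact ⟨B, .inl hB, h⟩
    · exact ⟨B, .inr hB, h⟩
  have hoc : ∀ t, OccRoot R t → TM (R ∪ cs.set) (t) := by
    rintro t ⟨B, hB, h⟩
    exact ⟨B, .inl hB, h⟩
  cases h <;> simp only [List.mem_cons, List.not_mem_nil, or_false, forall_eq_or_imp, forall_eq]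
  case fNeg A h => exact insert_good hΓ (.inl (hΓ _ h).ofNeg.neg)
  case fImp A B h =>
    have := (hΓ _ h).ofNeg
    exact insert_good (insert_good hΓ (.inr ⟨_, this.impR, rfl⟩)) (.inl this.impL)
  case tImp A B h =>
    have := (hΓ _ h).ofImp
    exact ⟨insert_good hΓ (.inr ⟨_, this.impL, rfl⟩), insert_good hΓ (.inl this.impR)⟩
  case te t A h =>
    have := (hΓ _ h).ofBox
    exact insert_good hΓ ⟨this.tm, this.box⟩
  case fe t A h =>
    have := (hΓ _ h).ofNeg
    exact insert_good hΓ ⟨this.tm, this.box⟩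
  case plusL t s A h =>
    obtain ⟨h1, h2⟩ := hΓ _ h
    exact insert_good hΓ ⟨h1.sub (.sumL (.refl _)), h2⟩
  case plusR t s A h =>
    obtain ⟨h1, h2⟩ := hΓ _ h
    exact insert_good hΓ ⟨h1.sub (.sumR (.refl _)), h2⟩
  case appR s t A B _ _ h1 h2 =>
    exact insert_good hΓ ⟨hoc _ h2, (hcs _ h1).impR⟩
  case rulePB A h =>
    exact ⟨insert_good hΓ (.inl (hcs _ h)), insert_good hΓ (.inr ⟨_, hcs _ h, rfl⟩)⟩
  case rulePBe t A h1 h2 =>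
    exact ⟨insert_good hΓ ⟨hoc _ h2, hcs _ h1⟩, insert_good hΓ ⟨hoc _ h2, hcs _ h1⟩⟩
  case ruleT t A _ h => exact insert_good hΓ (.inl (hΓ _ h).2)
  case ruleD t _ h => exact insert_good hΓ (.inl (hΓ _ h).2)
  case rule4 t A _ h =>
    obtain ⟨h1, h2⟩ := hΓ _ h
    exact insert_good hΓ ⟨h2.tm, h2.box⟩
  case ruleB t A _ h => exact insert_good hΓ (.inl (hΓ _ h).2.neg.box)
  case rule5 t A _ h =>
    have := (hΓ _ h).2.neg
    exact insert_good hΓ ⟨this.tm, this.box⟩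

end JLTab

/-- Termination: for a finite constant specification CS, every
JL^e_CS-tableau construction terminates: there is no infinite sequence of
non-redundant rule applications starting from the root branch {¬A}. -/
theorem JLTab.tableau_termination (L : Logic) (cs : ConstSpec L)
    (hfin : cs.set.Finite) (A : Fml) (f : ℕ → Set Node)
    (h0 : f 0 = {Node.fml (Fml.neg A)}) :
    ¬ (∀ n, Step L cs {Fml.neg A} (f n) (f (n + 1))) := by
  intro hs
  have hg : ∀ n, ∀ M ∈ f n, Good ({Fml.neg A} ∪ cs.set) M := by
    intro n
    induction n with
    | zero =>
      rw [h0]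
      rintro M rfl
      exact .inl ⟨_, .inl rfl, .refl _⟩
    | succ n ih =>
      obtain ⟨exts, h1, h2, -⟩ := hs n
      exact h1.good ih _ h2
  have hm : StrictMono f := strictMono_nat_of_lt_succ (fun n => by
    obtain ⟨_, _, _, h⟩ := hs n
    exact h)
  have hF := (finite_good ((Set.finite_singleton (Fml.neg A)).union hfin)).finite_subsets
  exact Set.infinite_range_of_injective hm.injective
    (hF.subset (by rintro _ ⟨n, rfl⟩; exact hg n))
end

section
/- Every axiom instance of JL is provable in the tableau system JL^e_CS without using the rules (PB), (PB_e), or (cut): for each axiom instance A of JL there is a closed tableau with root ¬A built using only the non-branching-to-arbitrary-formula rules. -/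
namespace JLTab

/-- Size of a formula, boxes being atomic. -/
def fsize : Fml → ℕ
  | .prop _ => 1
  | .bot => 1
  | .neg A => fsize A + 1
  | .imp A B => fsize A + fsize B + 2
  | .box _ _ => 1

/-- Atoms: propositional variables and boxes. -/
def IsAtom (A : Fml) : Prop := (∃ n, A = .prop n) ∨ (∃ t B, A = .box t B)

/-- Literals. -/
def IsLit (A : Fml) : Prop := IsAtom A ∨ ∃ B, IsAtom B ∧ A = .neg B

theorem taut_aux (L : Logic) (cs : ConstSpec L) (R : Set Fml) : ∀ (n : ℕ) (l lits : List Fml)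
    (Γ : Set Node), (l.map fsize).sum < n →
    (∀ A ∈ l, Node.fml A ∈ Γ) → (∀ A ∈ lits, Node.fml A ∈ Γ) → (∀ A ∈ lits, IsLit A) →
    (∀ v, ¬ ((∀ A ∈ l, evalProp v A = true) ∧ (∀ A ∈ lits, evalProp v A = true))) →
    Tab L cs false false R Γ := by
  classical
  intro n
  induction n with
  | zero => intro l lits Γ h; omega
  | succ n ih =>
    intro l lits Γ hs hl hlit hL hv
    rcases l with _ | ⟨C, l⟩
    · by_contra hno
      apply hv (fun B => decide (B ∈ lits))
      refine ⟨by simp, ?_⟩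
      intro A hA
      rcases hL A hA with (⟨k, rfl⟩ | ⟨t, B, rfl⟩) | ⟨B, hB, rfl⟩
      · simpa [evalProp] using hA
      · simpa [evalProp] using hA
      · have hn : B ∉ lits := fun hb => hno ⟨0, .closeF (hlit _ hb) (hlit _ hA)⟩
        rcases hB with ⟨k, rfl⟩ | ⟨t, B, rfl⟩
        · simpa [evalProp] using hn
        · simpa [evalProp] using hn
    · have hC : Node.fml C ∈ Γ := hl C (by simp)
      have hl' : ∀ A ∈ l, Node.fml A ∈ Γ := fun A hA => hl A (by simp [hA])
      simp only [List.map_cons, List.sum_cons] at hs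
      simp only [List.forall_mem_cons] at hv
      have lit : IsLit C → 0 < fsize C → Tab L cs false false R Γ := by
        intro hc hp
        refine ih l (C :: lits) Γ (by omega) hl' ?_ ?_ ?_
        · simpa using ⟨hC, hlit⟩
        · simpa using ⟨hc, hL⟩
        · intro v
          have := hv v
          simp only [List.forall_mem_cons]
          tauto
      rcases C with k | _ | D | ⟨D, E⟩ | ⟨t, D⟩
      · exact lit (.inl (.inl ⟨_, rfl⟩)) (by simp [fsize])
      · exact ⟨0, .closeBot hC⟩
      · rcases D with k | _ | E | ⟨E, F⟩ | ⟨t, E⟩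
        · exact lit (.inr ⟨_, .inl ⟨_, rfl⟩, rfl⟩) (by simp [fsize])
        · refine ih l lits Γ (by simp only [fsize] at hs; omega) hl' hlit hL ?_
          intro v
          have := hv v
          simp only [evalProp, Bool.not_false, true_and] at this
          exact this
        · obtain ⟨m, hm⟩ := ih (E :: l) lits (insert (Node.fml E) Γ)
            (by simp only [fsize, List.map_cons, List.sum_cons] at *; omega)
            (by simp only [List.forall_mem_cons]
                exact ⟨.inl rfl, fun A hA => .inr (hl' A hA)⟩)
            (fun A hA => .inr (hlit A hA)) hL
            (by intro v
                have := hv v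
                simpa [evalProp] using this)
          exact ⟨_, .fNeg hC hm⟩
        · obtain ⟨m, hm⟩ := ih (E :: .neg F :: l) lits
            (insert (Node.fml E) (insert (Node.fml (.neg F)) Γ))
            (by simp only [fsize, List.map_cons, List.sum_cons] at *; omega)
            (by simp only [List.forall_mem_cons]
                exact ⟨.inl rfl, .inr (.inl rfl), fun A hA => .inr (.inr (hl' A hA))⟩)
            (fun A hA => .inr (.inr (hlit A hA))) hL
            (by intro v
                have := hv v
                simp only [List.forall_mem_cons]
                simp only [evalProp, Bool.not_or, Bool.not_not, Bool.and_eq_true] at this ⊢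
                tauto)
          exact ⟨_, .fImp hC hm⟩
        · exact lit (.inr ⟨_, .inr ⟨_, _, rfl⟩, rfl⟩) (by simp [fsize])
      · obtain ⟨m, hm⟩ := ih (.neg D :: l) lits (insert (Node.fml (.neg D)) Γ)
            (by simp only [fsize, List.map_cons, List.sum_cons] at *; omega)
            (by simp only [List.forall_mem_cons]
                exact ⟨.inl rfl, fun A hA => .inr (hl' A hA)⟩)
            (fun A hA => .inr (hlit A hA)) hL
            (by intro v
                have := hv v
                simp only [List.forall_mem_cons]
                simp only [evalProp, Bool.or_eq_true] at this ⊢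
                tauto)
        obtain ⟨m', hm'⟩ := ih (E :: l) lits (insert (Node.fml E) Γ)
            (by simp only [fsize, List.map_cons, List.sum_cons] at *; omega)
            (by simp only [List.forall_mem_cons]
                exact ⟨.inl rfl, fun A hA => .inr (hl' A hA)⟩)
            (fun A hA => .inr (hlit A hA)) hL
            (by intro v
                have := hv v
                simp only [List.forall_mem_cons]
                simp only [evalProp, Bool.or_eq_true] at this ⊢
                tauto)
        exact ⟨_, .tImp hC hm hm'⟩
      · exact lit (.inl (.inr ⟨_, _, rfl⟩)) (by simp [fsize])

end JLTab

/-- every axiom instance of JL has a JL^e_CS-tableau proof that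
uses neither (PB), (PB_e) nor (cut) (both flags set to false). -/
theorem JLTab.axioms_provable_without_pb_cut (L : Logic) (cs : ConstSpec L)
    (A : Fml) (hA : Axm L A) : TabProof L cs false false A := by
  unfold TabProof
  cases hA with
  | taut h =>
    refine taut_aux L cs _ _ [.neg A] [] _ (Nat.lt_succ_self _) (by simp) (by simp) (by simp) ?_
    intro v hv
    have := h v
    simp [evalProp, this] at hv
  | @sumL s t A =>
    exact ⟨_, .fImp (A := .box s A) (B := .box (.sum s t) A) (by simp) <|
      .te (t := s) (A := A) (by simp) <| .fe (t := .sum s t) (A := A) (by simp) <|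
      .plusL (t := s) (s := t) (A := A) (by simp) <| .closeE (t := s) (A := A) (by simp) (by simp)⟩
  | @sumR s t A =>
    exact ⟨_, .fImp (A := .box s A) (B := .box (.sum t s) A) (by simp) <|
      .te (t := s) (A := A) (by simp) <| .fe (t := .sum t s) (A := A) (by simp) <|
      .plusR (t := t) (s := s) (A := A) (by simp) <| .closeE (t := s) (A := A) (by simp) (by simp)⟩
  | @jK s t A B =>
    exact ⟨_, .fImp (A := .box s (.imp A B)) (B := .imp (.box t A) (.box (.app s t) B)) (by simp) <|
      .fImp (A := .box t A) (B := .box (.app s t) B) (by simp) <|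
      .te (t := s) (A := .imp A B) (by simp) <| .te (t := t) (A := A) (by simp) <|
      .fe (t := .app s t) (A := B) (by simp) <|
      .appR (s := s) (t := t) (A := A) (B := B) (by simp) (by simp)
        (.inl ⟨_, rfl, .neg (.impL (.box (.refl _)))⟩)
        ⟨_, rfl, .neg (.impR (.impR (.boxT (.refl _))))⟩ <|
      .closeE (t := .app s t) (A := B) (by simp) (by simp)⟩
  | @jT t A h =>
    exact ⟨_, .fImp (A := .box t A) (B := A) (by simp) <|
      .te (t := t) (A := A) (by simp) <| .ruleT (t := t) (A := A) h (by simp) <|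
      .closeF (A := A) (by simp) (by simp)⟩
  | @jD t h =>
    exact ⟨_, .fImp (A := .box t .bot) (B := .bot) (by simp) <|
      .te (t := t) (A := .bot) (by simp) <| .ruleD (t := t) h (by simp) <|
      .closeBot (by simp)⟩
  | @j4 t A h =>
    exact ⟨_, .fImp (A := .box t A) (B := .box (.bang t) (.box t A)) (by simp) <|
      .te (t := t) (A := A) (by simp) <| .fe (t := .bang t) (A := .box t A) (by simp) <|
      .rule4 (t := t) (A := A) h (by simp) <| .closeE (t := t) (A := A) (by simp) (by simp)⟩
  | @jB t A h =>
    exact ⟨_, .fImp (A := .neg A) (B := .box (.qbar t) (.neg (.box t A))) (by simp) <|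
      .fe (t := .qbar t) (A := .neg (.box t A)) (by simp) <|
      .ruleB (t := t) (A := A) h (by simp) <| .closeF (A := A) (by simp) (by simp)⟩
  | @j5 t A h =>
    exact ⟨_, .fImp (A := .neg (.box t A)) (B := .box (.quest t) (.neg (.box t A))) (by simp) <|
      .fe (t := .quest t) (A := .neg (.box t A)) (by simp) <|
      .rule5 (t := t) (A := A) h (by simp) <|
      .fe (t := t) (A := A) (by simp) <| .closeE (t := t) (A := A) (by simp) (by simp)⟩
end
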